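/- arXiv:2506.06258 — 2 statements merged into one kernel-verified Lean document; each statement's English description precedes it below -/
import Mathlib

section
/- The set \mathcal{X}^\star \subseteq \mathbb{R}^{n\times m} \times \mathbb{R}^n \times \mathbb{R}^m \times \mathbb{R}^n of all quadruples (x, t, p, y) satisfying the KKT system of the Fisher market problem is a bounded set. -/
/-!
Every coordinate of a KKT point lies between `0` and a constant depending only on `(u, w)`, so the
solution set is contained in an order interval, which is compact. Since `x ≥ 0` has column sums
`1`, each `x i j` is at most `1`, hence `0 ≤ t i ≤ ∑ j, u i j`; then `t i * y i = w i > 0` makes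
`y i` positive. Complementarity and market clearing express each price as the total spending on
that good, `p j = ∑ i, u i j * x i j * y i`, and consumer `i` spends at most `t i * y i = w i` on
it, so `p j ≤ ∑ i, w i`. Finally `u i j * y i ≤ p j` for a good `j` with `u i j > 0` bounds `y i`.
-/

open BigOperators

/-- The space of primal-dual quadruples `(x, t, p, y)` of the Fisher market problem. -/
abbrev FisherQuad (n m : ℕ) :=
  (Fin n → Fin m → ℝ) × (Fin n → ℝ) × (Fin m → ℝ) × (Fin n → ℝ)

/-- The KKT system of the Fisher market problem, as a predicate on quadruples. -/
def FisherKKT (n m : ℕ) (u : Fin n → Fin m → ℝ) (w : Fin n → ℝ)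
    (z : FisherQuad n m) : Prop :=
  (∀ i, z.2.1 i * z.2.2.2 i = w i) ∧
  (∀ i j, z.1 i j * (z.2.2.1 j - u i j * z.2.2.2 i) = 0) ∧
  (∀ i j, 0 ≤ z.2.2.1 j - u i j * z.2.2.2 i) ∧
  (∀ j, ∑ i, z.1 i j = 1) ∧
  (∀ i, z.2.1 i = ∑ j, u i j * z.1 i j) ∧
  (∀ i j, 0 ≤ z.1 i j)

/-- The set `𝒳⋆` of all solutions of the KKT system of the Fisher market problem
is a bounded set. -/
theorem fisher_kkt_set_bounded (n m : ℕ) (u : Fin n → Fin m → ℝ) (w : Fin n → ℝ)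
    (hu : ∀ i j, 0 ≤ u i j)
    (hrow : ∀ i, ∃ j, 0 < u i j)
    (hcol : ∀ j, ∃ i, 0 < u i j)
    (hw : ∀ i, 0 < w i) :
    Bornology.IsBounded {z : FisherQuad n m | FisherKKT n m u w z} := by
  choose f hf using hrow
  -- The upper corner bounds `y i` through a good `f i` that consumer `i` values.
  refine (isCompact_Icc (a := (0 : FisherQuad n m))
    (b := (fun _ _ => 1, fun i => ∑ j, u i j, fun _ => ∑ i, w i,
      fun i => (∑ k, w k) / u i (f i)))).isBounded.subset ?_
  rintro ⟨x, t, p, y⟩ ⟨hty, hcomp, hdual, hsum, ht, hx⟩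
  dsimp only at hty hcomp hdual hsum ht hx
  have hx1 : ∀ i j, x i j ≤ 1 := fun i j => by
    rw [← hsum j]
    exact Finset.single_le_sum (f := fun k => x k j) (fun k _ => hx k j) (Finset.mem_univ i)
  have ht0 : ∀ i, 0 ≤ t i := fun i => by
    rw [ht i]
    exact Finset.sum_nonneg fun j _ => mul_nonneg (hu i j) (hx i j)
  have ht1 : ∀ i, t i ≤ ∑ j, u i j := fun i => by
    rw [ht i]
    exact Finset.sum_le_sum fun j _ => mul_le_of_le_one_right (hu i j) (hx1 i j)
  have hy0 : ∀ i, 0 ≤ y i := fun i =>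
    (pos_of_mul_pos_right (by rw [hty i]; exact hw i) (ht0 i)).le
  have hp0 : ∀ j, 0 ≤ p j := fun j => by
    obtain ⟨i, -⟩ := hcol j
    linarith [hdual i j, mul_nonneg (hu i j) (hy0 i)]
  have hp1 : ∀ j, p j ≤ ∑ i, w i := fun j => by
    calc p j = ∑ i, x i j * p j := by rw [← Finset.sum_mul, hsum j, one_mul]
      _ = ∑ i, u i j * x i j * y i :=
        Finset.sum_congr rfl fun i _ => by linear_combination hcomp i j
      _ ≤ ∑ i, w i := Finset.sum_le_sum fun i _ => by
        rw [← hty i, ht i]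
        exact mul_le_mul_of_nonneg_right
          (Finset.single_le_sum (f := fun k => u i k * x i k)
            (fun k _ => mul_nonneg (hu i k) (hx i k)) (Finset.mem_univ j)) (hy0 i)
  have hy1 : ∀ i, y i ≤ (∑ k, w k) / u i (f i) := fun i => by
    rw [le_div_iff₀ (hf i)]
    linarith [hdual i (f i), hp1 (f i)]
  exact ⟨⟨hx, ht0, hp0, hy0⟩, ⟨hx1, ht1, hp1, hy1⟩⟩
end

section
/- Let \mathcal{X}^\star denote the set of quadruples (x, t, p, y) satisfying the KKT system of the Fisher market problem, and for \xi > 0 define the scaled KKT residual F_\xi(x, t, p, y) as the vector with blocks (t_i y_i - w_i)_i, (x_{ij} - \max(x_{ij} - \frac{1}{\xi}(p_j - u_{ij} y_i), 0))_{ij}, (\min(p_j - u_{ij} y_i, 0))_{ij}, (\sum_{i=1}^n x_{ij} - 1)_j, and (t_i - \sum_{j=1}^m u_{ij} x_{ij})_i. Then for every R > 0 there exists \gamma > 0 such that \|F_\xi(x, t, p, y)\| \ge \gamma \cdot \mathrm{dist}((x, t, p, y), \mathcal{X}^\star) for every (x, t, p, y) with x \ge 0 and \|(x, t, p, y)\|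 \le R. -/
/-!
Fix a KKT point `z* = (x*, t*, p*, y*)` and let `ε` be the residual at `z = (x, t, p, y)`. If `ε` is
bounded below, the bound holds since the distance is bounded on the region, so `ε` may be taken
small; then `y` is bounded away from zero (`y_lower`).

Write `T = ‖t - t*‖`. From `t y ≈ w` one gets `|y - y*| = O(T + ε)` (`y_estimate`); from
`p j ≈ max_i u i j * y i` also `|p - p*| = O(T + ε)` (`p_estimate`); and `x i j = O(T + ε)` wherever
`p* j > u i j * y* i`. Given `t*, p*, y*`, the admissible `x'` form the polyhedron of nonnegative
solutions of a linear system whose residual at `x` is therefore `O(T + ε)`, so Hoffman's bound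
(`hoffman_nonneg`) yields a KKT point `z' = (x', t*, p*, y*)` at distance `D = O(T + ε)` from `z`.

On the other hand the KKT operator is monotone, strongly so in `t`, which gives `T² = O(ε D)`
(`monotone_estimate`). Hence `T² = O(ε (T + ε))`, so `T = O(ε)` and `D = O(ε)`.

Hoffman's bound is proved by sign patterns: a displacement `v` can be shrunk coordinatewise towards
`0`, keeping `A v`, until its sign cone meets `ker A` only in `0` (`exists_conformal_reduced`). On
each of the finitely many such cones `‖v‖ ≤ C ‖A v‖` by compactness (`signCone_bound`).
-/

open BigOperators

noncomputable section

/-- The Euclidean norm of a quadruple `(x, t, p, y)`. -/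
def quadNorm (n m : ℕ) (z : FisherQuad n m) : ℝ :=
  Real.sqrt ((∑ i, ∑ j, (z.1 i j) ^ 2) + (∑ i, (z.2.1 i) ^ 2) +
    (∑ j, (z.2.2.1 j) ^ 2) + (∑ i, (z.2.2.2 i) ^ 2))

/-- The Euclidean distance from a quadruple to a set of quadruples. -/
def quadDist (n m : ℕ) (z : FisherQuad n m) (S : Set (FisherQuad n m)) : ℝ :=
  sInf {d : ℝ | ∃ z' ∈ S, d = quadNorm n m (z - z')}

/-- The Euclidean norm of the scaled KKT residual `F_ξ(x, t, p, y)`. -/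
def FResidNorm (n m : ℕ) (u : Fin n → Fin m → ℝ) (w : Fin n → ℝ) (ξ : ℝ)
    (z : FisherQuad n m) : ℝ :=
  Real.sqrt ((∑ i, (z.2.1 i * z.2.2.2 i - w i) ^ 2) +
    (∑ i, ∑ j, (z.1 i j - max (z.1 i j - ξ⁻¹ * (z.2.2.1 j - u i j * z.2.2.2 i)) 0) ^ 2) +
    (∑ i, ∑ j, (min (z.2.2.1 j - u i j * z.2.2.2 i) 0) ^ 2) +
    (∑ j, ((∑ i, z.1 i j) - 1) ^ 2) +
    (∑ i, (z.2.1 i - ∑ j, u i j * z.1 i j) ^ 2))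

/-! ### Hoffman's bound -/

theorem exists_pos_le_all {ι : Type*} [Finite ι] (f : ι → ℝ) (hf : ∀ i, 0 < f i) :
    ∃ c : ℝ, 0 < c ∧ ∀ i, c ≤ f i := by
  obtain ⟨M, hM⟩ := Finite.exists_le (fun i => (f i)⁻¹)
  refine ⟨(max M 1)⁻¹, by positivity, fun i => ?_⟩
  exact inv_le_of_inv_le₀ (hf i) ((hM i).trans (le_max_left _ _))

theorem exists_nonneg_abs_le {ι : Type*} [Finite ι] (f : ι → ℝ) :
    ∃ M : ℝ, 0 ≤ M ∧ ∀ i, |f i| ≤ M := by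
  obtain ⟨M, hM⟩ := Finite.exists_le (fun i => |f i|)
  exact ⟨max M 0, le_max_right _ _, fun i => (hM i).trans (le_max_left _ _)⟩

/-- The closed cone of vectors with `v i ≥ 0`, `v i = 0` or `v i ≤ 0` according as `σ i` is `1`, `0`
or `-1`. -/
def signCone {ι : Type*} (σ : ι → SignType) : Set (ι → ℝ) :=
  {v | ∀ i, (0 ≤ (σ i : ℝ) * v i) ∧ (σ i = 0 → v i = 0)}

/-- On a sign cone meeting `ker A` only in `0`, the ratio `‖v‖ / ‖A v‖` is bounded, by compactness of
the unit sphere of the cone. -/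
theorem signCone_bound {ι : Type*} [Fintype ι] {V : Type*} [NormedAddCommGroup V]
    [NormedSpace ℝ V] (A : (ι → ℝ) →L[ℝ] V) (σ : ι → SignType)
    (h : ∀ k ∈ signCone σ, A k = 0 → k = 0) :
    ∃ C : ℝ, 0 ≤ C ∧ ∀ v ∈ signCone σ, ‖v‖ ≤ C * ‖A v‖ := by
  have hclosed : IsClosed (signCone σ) := by
    simp only [signCone, Set.ofPred_forall, Set.ofPred_and]
    refine isClosed_iInter fun i => IsClosed.inter ?_ ?_
    · exact isClosed_le continuous_const (by fun_prop)
    · exact isClosed_iInter fun _ => isClosed_eq (by fun_prop) continuous_const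
  have hK : IsCompact (Metric.sphere (0 : ι → ℝ) 1 ∩ signCone σ) :=
    (isCompact_sphere _ _).inter_right hclosed
  have hscale : ∀ v ∈ signCone σ, ∀ a : ℝ, 0 ≤ a → a • v ∈ signCone σ := by
    intro v hv a ha i
    refine ⟨?_, fun h0 => by simp [(hv i).2 h0]⟩
    have := mul_nonneg ha (hv i).1
    simp only [Pi.smul_apply, smul_eq_mul]
    linarith
  rcases (Metric.sphere (0 : ι → ℝ) 1 ∩ signCone σ).eq_empty_or_nonempty with he | hn
  · refine ⟨0, le_rfl, fun v hv => ?_⟩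
    by_contra hc
    have hpos : 0 < ‖v‖ := by simpa using hc
    have : ‖v‖⁻¹ • v ∈ Metric.sphere (0 : ι → ℝ) 1 ∩ signCone σ :=
      ⟨by simp [norm_smul, hpos.ne'], hscale v hv _ (by positivity)⟩
    rw [he] at this
    exact this
  · obtain ⟨v₀, hv₀, hmin⟩ := hK.exists_isMinOn hn (f := fun v => ‖A v‖) (by fun_prop)
    have hc : 0 < ‖A v₀‖ := by
      rw [norm_pos_iff]
      intro h0
      have := h v₀ hv₀.2 h0
      have h1 := hv₀.1
      simp [this] at h1
    refine ⟨‖A v₀‖⁻¹, by positivity, fun v hv => ?_⟩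
    rcases eq_or_ne v 0 with rfl | hne
    · simp
    have hpos : 0 < ‖v‖ := norm_pos_iff.2 hne
    have h2 : ‖A v₀‖ ≤ ‖A (‖v‖⁻¹ • v)‖ :=
      hmin ⟨by simp [norm_smul, hpos.ne'], hscale v hv _ (by positivity)⟩
    rw [map_smul, norm_smul, norm_inv, norm_norm] at h2
    rw [inv_mul_eq_div, le_div_iff₀ hc]
    calc ‖v‖ * ‖A v₀‖ ≤ ‖v‖ * (‖v‖⁻¹ * ‖A v‖) := by gcongr
      _ = ‖A v‖ := by field_simp

/-- Among the vectors between `0` and `v` coordinatewise with the same image under `A`, one of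
least `ℓ¹` norm has no nonzero kernel vector in its sign cone: subtracting a small multiple of such
a kernel vector would keep it between `0` and `v` and decrease the `ℓ¹` norm. -/
theorem exists_conformal_reduced {ι : Type*} [Fintype ι] {V : Type*} [NormedAddCommGroup V]
    [NormedSpace ℝ V] (A : (ι → ℝ) →L[ℝ] V) (v : ι → ℝ) :
    ∃ v' ∈ Set.uIcc 0 v, A v' = A v ∧
      ∀ k ∈ signCone (fun i => SignType.sign (v' i)), A k = 0 → k = 0 := by
  have hK : IsCompact (Set.uIcc 0 v ∩ {v' | A v' = A v}) :=
    (isCompact_Icc (a := 0 ⊓ v) (b := 0 ⊔ v)).inter_right (isClosed_eq A.continuous continuous_const)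
  obtain ⟨v', ⟨hv', hA⟩, hmin⟩ := hK.exists_isMinOn ⟨v, Set.right_mem_uIcc, rfl⟩
    (f := fun v' => ∑ i, |v' i|) (by fun_prop)
  have hA : A v' = A v := hA
  refine ⟨v', hv', hA, fun k hk hAk => ?_⟩
  have hev : ∀ᶠ τ in nhdsWithin (0 : ℝ) (Set.Ioi 0),
      ∀ i, |v' i - τ * k i| = |v' i| - τ * |k i| ∧ v' i - τ * k i ∈ Set.uIcc 0 (v' i) := by
    rw [Filter.eventually_all]
    intro i
    have hlim : Filter.Tendsto (fun τ : ℝ => v' i - τ * k i) (nhdsWithin 0 (Set.Ioi 0))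
        (nhds (v' i)) := by
      have : Continuous (fun τ : ℝ => v' i - τ * k i) := by fun_prop
      simpa using (this.tendsto 0).mono_left nhdsWithin_le_nhds
    obtain ⟨h1, h2⟩ := hk i
    rcases lt_trichotomy (v' i) 0 with h | h | h
    · have hk0 : k i ≤ 0 := by simpa [h] using h1
      filter_upwards [hlim.eventually_lt_const h, self_mem_nhdsWithin] with τ hτ hτ0
      have : τ * k i ≤ 0 := mul_nonpos_of_nonneg_of_nonpos (le_of_lt hτ0) hk0
      rw [abs_of_neg hτ, abs_of_neg h, abs_of_nonpos hk0, Set.uIcc_of_ge h.le]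
      exact ⟨by ring, by linarith, hτ.le⟩
    · have hk0 : k i = 0 := h2 (by simp [h])
      exact Filter.Eventually.of_forall fun τ => by simp [h, hk0]
    · have hk0 : 0 ≤ k i := by simpa [h] using h1
      filter_upwards [hlim.eventually_const_lt h, self_mem_nhdsWithin] with τ hτ hτ0
      have : 0 ≤ τ * k i := mul_nonneg (le_of_lt hτ0) hk0
      rw [abs_of_pos hτ, abs_of_pos h, abs_of_nonneg hk0, Set.uIcc_of_le h.le]
      exact ⟨by ring, hτ.le, by linarith⟩
  obtain ⟨τ, hτ, hτ0⟩ := (hev.and self_mem_nhdsWithin).exists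
  have hτ0 : 0 < τ := hτ0
  have hmem : v' - τ • k ∈ Set.uIcc 0 v ∩ {v' | A v' = A v} := by
    refine ⟨?_, by simp [hA, hAk]⟩
    have h1 : v' - τ • k ∈ Set.uIcc 0 v' :=
      ⟨fun i => (hτ i).2.1, fun i => (hτ i).2.2⟩
    exact Set.uIcc_subset_uIcc Set.left_mem_uIcc hv' h1
  have hle : ∑ i, |v' i| ≤ ∑ i, |v' i - τ * k i| := hmin hmem
  simp only [fun i => (hτ i).1, Finset.sum_sub_distrib, ← Finset.mul_sum] at hle
  have hsum : ∑ i, |k i| = 0 := by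
    have : 0 ≤ ∑ i, |k i| := Finset.sum_nonneg fun i _ => abs_nonneg _
    nlinarith
  rw [Finset.sum_eq_zero_iff_of_nonneg fun i _ => abs_nonneg _] at hsum
  ext i
  simpa using hsum i (Finset.mem_univ i)

/-- Hoffman's error bound for systems `x ≥ 0`, `A x = b` at nonnegative points. -/
theorem hoffman_nonneg {ι : Type*} [Fintype ι] {V : Type*} [NormedAddCommGroup V]
    [NormedSpace ℝ V] (A : (ι → ℝ) →L[ℝ] V) :
    ∃ C : ℝ, 0 ≤ C ∧ ∀ x x₀ : ι → ℝ, 0 ≤ x → 0 ≤ x₀ →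
      ∃ x', 0 ≤ x' ∧ A x' = A x₀ ∧ ‖x - x'‖ ≤ C * ‖A x - A x₀‖ := by
  have hσ : ∀ σ : ι → SignType, ∃ C : ℝ, 0 ≤ C ∧ ((∀ k ∈ signCone σ, A k = 0 → k = 0) →
      ∀ v ∈ signCone σ, ‖v‖ ≤ C * ‖A v‖) := by
    intro σ
    by_cases h : ∀ k ∈ signCone σ, A k = 0 → k = 0
    · obtain ⟨C, hC, hb⟩ := signCone_bound A σ h
      exact ⟨C, hC, fun _ => hb⟩
    · exact ⟨0, le_rfl, fun h' => absurd h' h⟩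
  choose C hC0 hC using hσ
  obtain ⟨M, hM0, hM⟩ := exists_nonneg_abs_le C
  refine ⟨M, hM0, fun x x₀ hx hx₀ => ?_⟩
  obtain ⟨v', hv', hA, hk⟩ := exists_conformal_reduced A (x₀ - x)
  have hself : v' ∈ signCone (fun i => SignType.sign (v' i)) := fun i =>
    ⟨by rw [sign_mul_self]; exact abs_nonneg _, fun h => sign_eq_zero_iff.1 h⟩
  refine ⟨x + v', fun i => ?_, by rw [map_add, hA]; simp, ?_⟩
  · have h1 := hv'.1 i
    have h2 := hx i
    have h3 := hx₀ i
    simp only [Pi.inf_apply, Pi.zero_apply, Pi.sub_apply, Pi.add_apply] at *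
    rcases min_choice 0 (x₀ i - x i) with h | h <;> rw [h] at h1 <;> linarith
  · have h1 := hC _ hk v' hself
    rw [hA, map_sub, norm_sub_rev] at h1
    simp only [sub_add_cancel_left, norm_neg]
    exact h1.trans (by gcongr; exact (le_abs_self _).trans (hM _))

/-! ### Residuals and norms in coordinates -/

/-- Every coordinate of `z` has absolute value at most `D`. -/
structure QuadLe {n m : ℕ} (D : ℝ) (z : FisherQuad n m) : Prop where
  x : ∀ i j, |z.1 i j| ≤ D
  t : ∀ i, |z.2.1 i| ≤ D
  p : ∀ j, |z.2.2.1 j| ≤ D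
  y : ∀ i, |z.2.2.2 i| ≤ D

/-- The KKT system up to an error `ε`. Complementarity is kept as a dichotomy: either the slack
`p j - u i j * y i` is of order `ε`, or it is nonnegative and `x i j ≤ ε`. -/
structure ApproxKKT {n m : ℕ} (u : Fin n → Fin m → ℝ) (w : Fin n → ℝ) (ξ ε : ℝ)
    (z : FisherQuad n m) : Prop where
  budget : ∀ i, |z.2.1 i * z.2.2.2 i - w i| ≤ ε
  compl : ∀ i j, |z.2.2.1 j - u i j * z.2.2.2 i| ≤ ξ * ε ∨
    (0 ≤ z.2.2.1 j - u i j * z.2.2.2 i ∧ z.1 i j ≤ ε)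
  slack : ∀ i j, -ε ≤ z.2.2.1 j - u i j * z.2.2.2 i
  supply : ∀ j, |(∑ i, z.1 i j) - 1| ≤ ε
  util : ∀ i, |z.2.1 i - ∑ j, u i j * z.1 i j| ≤ ε
  nonneg : ∀ i j, 0 ≤ z.1 i j

theorem quadLe_quadNorm {n m : ℕ} (z : FisherQuad n m) : QuadLe (quadNorm n m z) z := by
  have hx : ∀ i, 0 ≤ ∑ j, (z.1 i j) ^ 2 := fun i => Finset.sum_nonneg fun j _ => sq_nonneg _
  have h1 : 0 ≤ ∑ i, ∑ j, (z.1 i j) ^ 2 := Finset.sum_nonneg fun i _ => hx i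
  have h2 : 0 ≤ ∑ i, (z.2.1 i) ^ 2 := Finset.sum_nonneg fun i _ => sq_nonneg _
  have h3 : 0 ≤ ∑ j, (z.2.2.1 j) ^ 2 := Finset.sum_nonneg fun i _ => sq_nonneg _
  have h4 : 0 ≤ ∑ i, (z.2.2.2 i) ^ 2 := Finset.sum_nonneg fun i _ => sq_nonneg _
  refine ⟨fun i j => ?_, fun i => ?_, fun j => ?_, fun i => ?_⟩ <;> apply Real.abs_le_sqrt
  · have a := Finset.single_le_sum (f := fun j => (z.1 i j) ^ 2)
      (fun j _ => sq_nonneg _) (Finset.mem_univ j)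
    have b := Finset.single_le_sum (f := fun i => ∑ j, (z.1 i j) ^ 2)
      (fun i _ => hx i) (Finset.mem_univ i)
    linarith
  · have a := Finset.single_le_sum (f := fun i => (z.2.1 i) ^ 2)
      (fun j _ => sq_nonneg _) (Finset.mem_univ i)
    linarith
  · have a := Finset.single_le_sum (f := fun j => (z.2.2.1 j) ^ 2)
      (fun j _ => sq_nonneg _) (Finset.mem_univ j)
    linarith
  · have a := Finset.single_le_sum (f := fun i => (z.2.2.2 i) ^ 2)
      (fun j _ => sq_nonneg _) (Finset.mem_univ i)
    linarith

theorem quadNorm_le {n m : ℕ} {z : FisherQuad n m} {D : ℝ} (hD : 0 ≤ D) (h : QuadLe D z) :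
    quadNorm n m z ≤ Real.sqrt (n * m + n + m + n) * D := by
  have key : ∀ a : ℝ, |a| ≤ D → a ^ 2 ≤ D ^ 2 := fun a ha => sq_le_sq' (abs_le.1 ha).1 (abs_le.1 ha).2
  have h1 : ∑ i, ∑ j, (z.1 i j) ^ 2 ≤ n * m * D ^ 2 := by
    calc ∑ i, ∑ j, (z.1 i j) ^ 2 ≤ ∑ _i : Fin n, ∑ _j : Fin m, D ^ 2 :=
          Finset.sum_le_sum fun i _ => Finset.sum_le_sum fun j _ => key _ (h.x i j)
      _ = n * m * D ^ 2 := by simp; ring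
  have h2 : ∑ i, (z.2.1 i) ^ 2 ≤ n * D ^ 2 := by
    simpa using Finset.sum_le_sum fun i (_ : i ∈ Finset.univ) => key _ (h.t i)
  have h3 : ∑ j, (z.2.2.1 j) ^ 2 ≤ m * D ^ 2 := by
    simpa using Finset.sum_le_sum fun i (_ : i ∈ Finset.univ) => key _ (h.p i)
  have h4 : ∑ i, (z.2.2.2 i) ^ 2 ≤ n * D ^ 2 := by
    simpa using Finset.sum_le_sum fun i (_ : i ∈ Finset.univ) => key _ (h.y i)
  unfold quadNorm
  calc _ ≤ Real.sqrt ((n * m + n + m + n) * D ^ 2) := by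
        apply Real.sqrt_le_sqrt; linarith
    _ = _ := by rw [Real.sqrt_mul (by positivity), Real.sqrt_sq hD]

theorem quadDist_le {n m : ℕ} {z z' : FisherQuad n m} {S : Set (FisherQuad n m)} (h : z' ∈ S) :
    quadDist n m z S ≤ quadNorm n m (z - z') := by
  refine csInf_le ⟨0, ?_⟩ ⟨z', h, rfl⟩
  rintro _ ⟨_, _, rfl⟩
  exact Real.sqrt_nonneg _

theorem compl_dichotomy {x s ξ ε : ℝ} (hξ : 0 < ξ) (hx : 0 ≤ x)
    (h : |x - max (x - ξ⁻¹ * s) 0| ≤ ε) : |s| ≤ ξ * ε ∨ (0 ≤ s ∧ x ≤ ε) := by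
  have hs : ξ * (ξ⁻¹ * s) = s := by field_simp
  rcases le_total 0 (x - ξ⁻¹ * s) with h0 | h0
  · left
    rw [max_eq_left h0] at h
    have : |ξ⁻¹ * s| ≤ ε := by simpa using h
    rw [← hs, abs_mul, abs_of_pos hξ]
    gcongr
  · right
    rw [max_eq_right h0, sub_zero, abs_of_nonneg hx] at h
    refine ⟨?_, h⟩
    rw [← hs]
    apply mul_nonneg hξ.le
    linarith

theorem approxKKT_of_resid {n m : ℕ} (u : Fin n → Fin m → ℝ) (w : Fin n → ℝ) {ξ : ℝ} (hξ : 0 < ξ)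
    (z : FisherQuad n m) (hx : ∀ i j, 0 ≤ z.1 i j) :
    ApproxKKT u w ξ (FResidNorm n m u w ξ z) z := by
  obtain ⟨f1, hf1⟩ : ∃ f1 : Fin n → ℝ, f1 = fun i => z.2.1 i * z.2.2.2 i - w i := ⟨_, rfl⟩
  obtain ⟨f2, hf2⟩ : ∃ f2 : Fin n → Fin m → ℝ, f2 = fun i j =>
    z.1 i j - max (z.1 i j - ξ⁻¹ * (z.2.2.1 j - u i j * z.2.2.2 i)) 0 := ⟨_, rfl⟩
  obtain ⟨f3, hf3⟩ : ∃ f3 : Fin n → Fin m → ℝ, f3 = fun i j =>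
    min (z.2.2.1 j - u i j * z.2.2.2 i) 0 := ⟨_, rfl⟩
  obtain ⟨f4, hf4⟩ : ∃ f4 : Fin m → ℝ, f4 = fun j => (∑ i, z.1 i j) - 1 := ⟨_, rfl⟩
  obtain ⟨f5, hf5⟩ : ∃ f5 : Fin n → ℝ, f5 = fun i => z.2.1 i - ∑ j, u i j * z.1 i j := ⟨_, rfl⟩
  have hF : FResidNorm n m u w ξ z = Real.sqrt ((∑ i, f1 i ^ 2) + (∑ i, ∑ j, f2 i j ^ 2) +
      (∑ i, ∑ j, f3 i j ^ 2) + (∑ j, f4 j ^ 2) + (∑ i, f5 i ^ 2)) := by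
    rw [hf1, hf2, hf3, hf4, hf5]; rfl
  have one : ∀ {k : ℕ} (g : Fin k → ℝ), 0 ≤ ∑ i, g i ^ 2 ∧ ∀ i, g i ^ 2 ≤ ∑ i, g i ^ 2 := fun g =>
    ⟨Finset.sum_nonneg fun i _ => sq_nonneg _, fun i =>
      Finset.single_le_sum (f := fun i => g i ^ 2) (fun j _ => sq_nonneg _) (Finset.mem_univ i)⟩
  have two : ∀ g : Fin n → Fin m → ℝ, 0 ≤ ∑ i, ∑ j, g i j ^ 2 ∧
      ∀ i j, g i j ^ 2 ≤ ∑ i, ∑ j, g i j ^ 2 := fun g =>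
    ⟨Finset.sum_nonneg fun i _ => (one (g i)).1, fun i j => ((one (g i)).2 j).trans
      (Finset.single_le_sum (f := fun i => ∑ j, g i j ^ 2) (fun i _ => (one (g i)).1)
        (Finset.mem_univ i))⟩
  obtain ⟨p1, q1⟩ := one f1
  obtain ⟨p2, q2⟩ := two f2
  obtain ⟨p3, q3⟩ := two f3
  obtain ⟨p4, q4⟩ := one f4
  obtain ⟨p5, q5⟩ := one f5
  have b1 : ∀ i, |f1 i| ≤ FResidNorm n m u w ξ z := fun i => by
    rw [hF]; apply Real.abs_le_sqrt; linarith [q1 i]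
  have b2 : ∀ i j, |f2 i j| ≤ FResidNorm n m u w ξ z := fun i j => by
    rw [hF]; apply Real.abs_le_sqrt; linarith [q2 i j]
  have b3 : ∀ i j, |f3 i j| ≤ FResidNorm n m u w ξ z := fun i j => by
    rw [hF]; apply Real.abs_le_sqrt; linarith [q3 i j]
  have b4 : ∀ j, |f4 j| ≤ FResidNorm n m u w ξ z := fun j => by
    rw [hF]; apply Real.abs_le_sqrt; linarith [q4 j]
  have b5 : ∀ i, |f5 i| ≤ FResidNorm n m u w ξ z := fun i => by
    rw [hF]; apply Real.abs_le_sqrt; linarith [q5 i]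
  subst hf1 hf2 hf3 hf4 hf5
  exact ⟨b1, fun i j => compl_dichotomy hξ (hx i j) (b2 i j),
    fun i j => (abs_le.1 (b3 i j)).1.trans (min_le_left _ _), b4, b5, hx⟩

/-! ### Estimates at approximate KKT points -/

/-- Monotonicity of the KKT operator. The pairing `∑ (t - t') (y - y')` is bounded below through
the linear constraints and complementarity, and above through `t y ≈ w = t' y'`. All the error
terms are of the form `ε * D`, with `D` a bound for the distance between the two points. -/
theorem monotone_estimate {n m : ℕ} {u : Fin n → Fin m → ℝ} {w : Fin n → ℝ} {ξ ε D : ℝ}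
    (hu : ∀ i j, 0 ≤ u i j) (hξ : 0 < ξ) (hε : 0 ≤ ε) (hD : 0 ≤ D) {z z' : FisherQuad n m}
    (hz : ApproxKKT u w ξ ε z) (hz' : FisherKKT n m u w z') (hd : QuadLe D (z - z'))
    (ht' : ∀ i, 0 < z'.2.1 i) :
    ∑ i, (z.2.1 i - z'.2.1 i) ^ 2 * (z.2.2.2 i / z'.2.1 i) ≤
      (∑ i, (z'.2.1 i)⁻¹ + n + m + ∑ i, ∑ j, (ξ + 1 + u i j)) * (ε * D) := by
  obtain ⟨x, t, p, y⟩ := z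
  obtain ⟨x', t', p', y'⟩ := z'
  obtain ⟨e1, e2, e3, e4, e5, e6⟩ := hz
  obtain ⟨k1, k2, k3, k4, k5, k6⟩ := hz'
  obtain ⟨dx, dt, dp, dy⟩ := hd
  simp only [Prod.fst_sub, Prod.snd_sub, Pi.sub_apply] at *
  have abs_prod : ∀ a b : ℝ, |a| ≤ ε → |b| ≤ D → |a * b| ≤ ε * D := fun a b ha hb => by
    rw [abs_mul]; exact mul_le_mul ha hb (abs_nonneg _) hε
  have hup : ∀ i, (t i - t' i) ^ 2 * (y i / t' i) ≤
      (t' i)⁻¹ * (ε * D) - (t i - t' i) * (y i - y' i) := by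
    intro i
    have h0 := ht' i
    have h1 := (abs_le.1 (abs_prod _ _ (e1 i) (dt i))).2
    have h2 : (t i - t' i) ^ 2 * (y i / t' i) =
        (t' i)⁻¹ * ((t i * y i - w i) * (t i - t' i)) - (t i - t' i) * (y i - y' i) := by
      rw [← k1 i]; field_simp; ring
    rw [h2]
    gcongr
  have hs : ∀ i j, (x i j - x' i j) * ((p j - u i j * y i) - (p' j - u i j * y' i)) ≤
      (ξ + 1 + u i j) * (ε * D) := by
    intro i j
    have hεD : 0 ≤ ε * D := mul_nonneg hε hD
    have huD := mul_nonneg (hu i j) hεD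
    have hξD := mul_nonneg hξ.le hεD
    have hk := k2 i j
    rcases e2 i j with h | ⟨h, h'⟩
    · have h1 : (p j - u i j * y i) * (x i j - x' i j) ≤ ξ * ε * D := by
        refine (le_abs_self _).trans ?_
        rw [abs_mul]; exact mul_le_mul h (dx i j) (abs_nonneg _) (by positivity)
      have h2 := mul_nonneg (e6 i j) (k3 i j)
      nlinarith
    · have h1 : |(p j - u i j * y i) - (p' j - u i j * y' i)| ≤ (1 + u i j) * D := by
        have a := abs_le.1 (dp j)
        have b := abs_le.1 (dy i)
        have b1 := mul_le_mul_of_nonneg_left b.1 (hu i j)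
        have b2 := mul_le_mul_of_nonneg_left b.2 (hu i j)
        rw [abs_le]; constructor <;> nlinarith
      have h2 : x i j * ((p j - u i j * y i) - (p' j - u i j * y' i)) ≤ ε * ((1 + u i j) * D) :=
        (mul_le_mul_of_nonneg_left ((le_abs_self _).trans h1) (e6 i j)).trans
          (mul_le_mul_of_nonneg_right h' (mul_nonneg (by linarith [hu i j]) hD))
      have h3 := mul_nonneg (k6 i j) h
      nlinarith
  have hid : ∑ i, (t i - t' i) * (y i - y' i) =
      ∑ i, (t i - ∑ j, u i j * x i j) * (y i - y' i) + ∑ j, ((∑ i, x i j) - 1) * (p j - p' j) -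
      ∑ i, ∑ j, (x i j - x' i j) * ((p j - u i j * y i) - (p' j - u i j * y' i)) := by
    have a : ∑ j, ((∑ i, x i j) - 1) * (p j - p' j) =
        ∑ i, ∑ j, (x i j - x' i j) * (p j - p' j) := by
      rw [Finset.sum_comm]
      refine Finset.sum_congr rfl fun j _ => ?_
      rw [← Finset.sum_mul, Finset.sum_sub_distrib, k4 j]
    rw [a, add_sub_assoc, ← Finset.sum_sub_distrib, ← Finset.sum_add_distrib]
    refine Finset.sum_congr rfl fun i _ => ?_
    rw [← Finset.sum_sub_distrib]
    have b : ∑ j, ((x i j - x' i j) * (p j - p' j) -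
        (x i j - x' i j) * ((p j - u i j * y i) - (p' j - u i j * y' i))) =
        (∑ j, u i j * x i j - ∑ j, u i j * x' i j) * (y i - y' i) := by
      rw [← Finset.sum_sub_distrib, Finset.sum_mul]
      exact Finset.sum_congr rfl fun j _ => by ring
    rw [b, ← k5 i]; ring
  have s1 := Finset.sum_le_sum fun i (_ : i ∈ Finset.univ) => hup i
  have s2 := Finset.sum_le_sum fun i (_ : i ∈ Finset.univ) =>
    Finset.sum_le_sum fun j (_ : j ∈ Finset.univ) => hs i j
  have s3 : ∑ _i : Fin n, -(ε * D) ≤ ∑ i, (t i - ∑ j, u i j * x i j) * (y i - y' i) :=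
    Finset.sum_le_sum fun i _ => (abs_le.1 (abs_prod _ _ (e5 i) (dy i))).1
  have s4 : ∑ _j : Fin m, -(ε * D) ≤ ∑ j, ((∑ i, x i j) - 1) * (p j - p' j) :=
    Finset.sum_le_sum fun j _ => (abs_le.1 (abs_prod _ _ (e4 j) (dp j))).1
  rw [Finset.sum_sub_distrib, ← Finset.sum_mul, hid] at s1
  simp only [← Finset.sum_mul] at s2
  simp only [Finset.sum_const, Finset.card_univ, Fintype.card_fin, nsmul_eq_mul] at s3 s4
  linarith

/-- When the residual is small, all `y i` are bounded away from zero. -/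
theorem y_lower {n m : ℕ} {u : Fin n → Fin m → ℝ} {w : Fin n → ℝ} {ξ ε R : ℝ}
    (hu : ∀ i j, 0 ≤ u i j) (hR : 0 < R) (hε : 0 ≤ ε) {z : FisherQuad n m}
    (hz : ApproxKKT u w ξ ε z) (hzR : QuadLe R z) (i : Fin n) (h1 : ε ≤ w i / 2)
    (h2 : ε * R < w i / 2) : w i / (2 * R) ≤ z.2.2.2 i := by
  have ht : -ε ≤ z.2.1 i := by
    have a := (abs_le.1 (hz.util i)).1
    have b : 0 ≤ ∑ j, u i j * z.1 i j :=
      Finset.sum_nonneg fun j _ => mul_nonneg (hu i j) (hz.nonneg i j)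
    linarith
  have hty : w i / 2 ≤ z.2.1 i * z.2.2.2 i := by linarith [(abs_le.1 (hz.budget i)).1]
  have hy := abs_le.1 (hzR.y i)
  have htR := abs_le.1 (hzR.t i)
  have htpos : 0 < z.2.1 i := by
    by_contra hneg
    push Not at hneg
    nlinarith
  have hypos : 0 < z.2.2.2 i := by
    by_contra hneg
    push Not at hneg
    nlinarith
  rw [div_le_iff₀ (by positivity)]
  nlinarith

/-- The linear part of the KKT system in `x`: supplies, utilities, and the entries on a set `P` of
pairs where `x` is required to vanish. -/
def allocMap {n m : ℕ} (u : Fin n → Fin m → ℝ) (P : Fin n × Fin m → Prop) [DecidablePred P] :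
    (Fin n × Fin m → ℝ) →L[ℝ] (Fin m → ℝ) × (Fin n → ℝ) × (Fin n × Fin m → ℝ) :=
  LinearMap.toContinuousLinearMap
    { toFun := fun x => (fun j => ∑ i, x (i, j), fun i => ∑ j, u i j * x (i, j),
        fun q => if P q then x q else 0)
      map_add' := fun x x' => by
        ext q
        · simp [Finset.sum_add_distrib]
        · simp [Finset.sum_add_distrib, mul_add]
        · by_cases h : P q <;> simp [h]
      map_smul' := fun a x => by
        ext q
        · simp [Finset.mul_sum]
        · simp [Finset.mul_sum, mul_left_comm]
        · by_cases h : P q <;> simp [h] }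

theorem allocMap_apply {n m : ℕ} (u : Fin n → Fin m → ℝ) (P : Fin n × Fin m → Prop)
    [DecidablePred P] (x : Fin n × Fin m → ℝ) :
    allocMap u P x = (fun j => ∑ i, x (i, j), fun i => ∑ j, u i j * x (i, j),
        fun q => if P q then x q else 0) := rfl

theorem kkt_t_pos {n m : ℕ} {u : Fin n → Fin m → ℝ} {w : Fin n → ℝ} (hu : ∀ i j, 0 ≤ u i j)
    (hw : ∀ i, 0 < w i) {z : FisherQuad n m} (hz : FisherKKT n m u w z) (i : Fin n) :
    0 < z.2.1 i := by
  obtain ⟨k1, _, _, _, k5, k6⟩ := hz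
  refine lt_of_le_of_ne ?_ fun h => ?_
  · rw [k5 i]
    exact Finset.sum_nonneg fun j _ => mul_nonneg (hu i j) (k6 i j)
  · have := k1 i
    rw [← h, zero_mul] at this
    exact (hw i).ne this

theorem y_estimate {t y t' y' w I R T ε : ℝ} (h' : t' * y' = w) (ht' : 0 < t') (hI : t'⁻¹ ≤ I)
    (hR : 0 ≤ R) (hT : 0 ≤ T) (hε : 0 ≤ ε) (h : |t * y - w| ≤ ε) (hy : |y| ≤ R)
    (htt : |t - t'| ≤ T) : |y - y'| ≤ I * (R + 1) * (T + ε) := by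
  have h1 : y - y' = t'⁻¹ * ((t * y - w) - (t - t') * y) := by
    rw [← h']; field_simp; ring
  have hi : 0 < t'⁻¹ := inv_pos.2 ht'
  have h2 : |(t * y - w) - (t - t') * y| ≤ ε + T * R := by
    refine (abs_sub _ _).trans (add_le_add h ?_)
    rw [abs_mul]
    exact mul_le_mul htt hy (abs_nonneg _) hT
  rw [h1, abs_mul, abs_of_pos hi, mul_assoc]
  refine mul_le_mul hI (h2.trans ?_) (abs_nonneg _) (hi.le.trans hI)
  nlinarith [mul_nonneg hR hε]

/-- Closeness of `y` to `y'` gives closeness of prices: `p j` is within `O(ε)` of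
`max_i (u i j * y i)`, the maximum being nearly attained at any consumer who buys more than `ε` of
good `j`, and such a consumer exists since `ε * (n + 1) < 1`. -/
theorem p_estimate {n m : ℕ} {u : Fin n → Fin m → ℝ} {w : Fin n → ℝ} {ξ ε δ U : ℝ}
    (hu : ∀ i j, 0 ≤ u i j) (hU : ∀ i j, u i j ≤ U) (hξ : 0 < ξ) (hε : 0 ≤ ε)
    (hεn : ε * (n + 1) < 1) {z z' : FisherQuad n m}
    (hz : ApproxKKT u w ξ ε z) (hz' : FisherKKT n m u w z')
    (hy : ∀ i, |z.2.2.2 i - z'.2.2.2 i| ≤ δ) (j : Fin m) :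
    |z.2.2.1 j - z'.2.2.1 j| ≤ U * δ + (1 + ξ) * ε := by
  obtain ⟨k1, k2, k3, k4, k5, k6⟩ := hz'
  have hδ : ∀ i, |u i j * (z.2.2.2 i - z'.2.2.2 i)| ≤ U * δ := fun i => by
    rw [abs_mul, abs_of_nonneg (hu i j)]
    exact mul_le_mul (hU i j) (hy i) (abs_nonneg _) ((hu i j).trans (hU i j))
  have hξε := mul_nonneg hξ.le hε
  rw [abs_le]
  constructor
  · obtain ⟨i, hi⟩ : ∃ i, z'.1 i j ≠ 0 := by
      by_contra hc
      push Not at hc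
      have := k4 j
      simp [hc] at this
    have h1 : z'.2.2.1 j - u i j * z'.2.2.2 i = 0 := (mul_eq_zero.1 (k2 i j)).resolve_left hi
    have h2 := (abs_le.1 (hδ i)).1
    have h3 := hz.slack i j
    linarith
  · obtain ⟨i, hi⟩ : ∃ i, ε < z.1 i j := by
      by_contra hc
      push Not at hc
      have h1 : ∑ i, z.1 i j ≤ ∑ _i : Fin n, ε := Finset.sum_le_sum fun i _ => hc i
      have h2 := (abs_le.1 (hz.supply j)).1
      simp only [Finset.sum_const, Finset.card_univ, Fintype.card_fin, nsmul_eq_mul] at h1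
      linarith
    have h1 := (hz.compl i j).resolve_right fun h => absurd h.2 (not_le.2 hi)
    have h2 := (abs_le.1 h1).2
    have h3 := (abs_le.1 (hδ i)).2
    have h4 := k3 i j
    linarith

/-- Error bound in the regime of small residual: a point of the bounded region with residual `ε ≤ ε₀`
is within `C * ε`, coordinatewise, of a KKT point. -/
theorem small_resid_bound {n m : ℕ} {u : Fin n → Fin m → ℝ} {w : Fin n → ℝ} {ξ R : ℝ}
    (hu : ∀ i j, 0 ≤ u i j) (hw : ∀ i, 0 < w i) (hξ : 0 < ξ) (hR : 0 < R)
    {zs : FisherQuad n m} (hzs : FisherKKT n m u w zs) :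
    ∃ ε₀ C : ℝ, 0 < ε₀ ∧ 0 ≤ C ∧ ∀ (ε : ℝ) (z : FisherQuad n m), 0 ≤ ε → ε ≤ ε₀ →
      ApproxKKT u w ξ ε z → QuadLe R z → ∃ z', FisherKKT n m u w z' ∧ QuadLe (C * ε) (z - z') := by
  classical
  have hts := kkt_t_pos hu hw hzs
  obtain ⟨xs, ts, ps, ys⟩ := zs
  have hzs0 := hzs
  obtain ⟨k1, k2, k3, k4, k5, k6⟩ := hzs
  simp only at *
  obtain ⟨I, hI0, hI⟩ := exists_nonneg_abs_le (fun i => (ts i)⁻¹)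
  obtain ⟨U, hU0, hU⟩ := exists_nonneg_abs_le (fun q : Fin n × Fin m => u q.1 q.2)
  obtain ⟨J, hJ0, hJ⟩ := exists_nonneg_abs_le
    (fun q : Fin n × Fin m => (ps q.2 - u q.1 q.2 * ys q.1)⁻¹)
  obtain ⟨H, hH0, hH⟩ := hoffman_nonneg
    (allocMap u (fun q : Fin n × Fin m => 0 < ps q.2 - u q.1 q.2 * ys q.1))
  obtain ⟨c, hc0, hc⟩ := exists_pos_le_all (fun i => w i / (2 * R) / ts i)
    (fun i => div_pos (div_pos (hw i) (by positivity)) (hts i))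
  obtain ⟨ω, hω0, hω⟩ := exists_pos_le_all w hw
  have hU' : ∀ i j, u i j ≤ U := fun i j => (le_abs_self _).trans (hU (i, j))
  -- Constants of the estimates for `y`, `p`, the entries of `x` forced to vanish, and all of `z`.
  obtain ⟨Cy, hCy⟩ : ∃ Cy, Cy = I * (R + 1) := ⟨_, rfl⟩
  have hCy0 : 0 ≤ Cy := by rw [hCy]; positivity
  obtain ⟨Cp, hCp⟩ : ∃ Cp, Cp = U * Cy + (1 + ξ) := ⟨_, rfl⟩
  have hCp0 : 0 ≤ Cp := by rw [hCp]; positivity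
  obtain ⟨Cx, hCx⟩ : ∃ Cx, Cx = 1 + R * J * (ξ + Cp + U * Cy) := ⟨_, rfl⟩
  have hCx0 : 0 ≤ Cx := by rw [hCx]; positivity
  obtain ⟨Cd, hCd⟩ : ∃ Cd, Cd = H * (1 + Cx) + 1 + Cp + Cy := ⟨_, rfl⟩
  have hHC : 0 ≤ H * (1 + Cx) := by positivity
  have hCd0 : 0 ≤ Cd := by rw [hCd]; positivity
  obtain ⟨B, hB⟩ : ∃ B, B = ∑ i, (ts i)⁻¹ + n + m + ∑ i, ∑ j, (ξ + 1 + u i j) := ⟨_, rfl⟩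
  have hB0 : 0 ≤ B := by
    rw [hB]
    have a : 0 ≤ ∑ i, (ts i)⁻¹ := Finset.sum_nonneg fun i _ => (inv_pos.2 (hts i)).le
    have b : 0 ≤ ∑ i, ∑ j, (ξ + 1 + u i j) := Finset.sum_nonneg fun i _ =>
      Finset.sum_nonneg fun j _ => by linarith [hu i j]
    positivity
  obtain ⟨G, hG⟩ : ∃ G, G = B * Cd / c := ⟨_, rfl⟩
  have hG0 : 0 ≤ G := by rw [hG]; positivity
  refine ⟨min (ω / 2) (min (ω / (4 * R)) (1 / (2 * (n + 1)))), Cd * (2 * G + 2), by positivity,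
    by positivity, fun ε z hε hεle hz hzR => ?_⟩
  have hε1 : ε ≤ ω / 2 := hεle.trans (min_le_left _ _)
  have hε2 : ε * R ≤ ω / 4 := by
    have := hεle.trans ((min_le_right _ _).trans (min_le_left _ _))
    rw [le_div_iff₀ (by positivity)] at this
    linarith
  have hε3 : ε * (n + 1) < 1 := by
    have := hεle.trans ((min_le_right _ _).trans (min_le_right _ _))
    rw [le_div_iff₀ (by positivity)] at this
    linarith
  have hylow : ∀ i, w i / (2 * R) ≤ z.2.2.2 i := fun i =>
    y_lower hu hR hε hz hzR i (by linarith [hω i]) (by linarith [hω i])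
  obtain ⟨Q, hQ⟩ : ∃ Q, Q = ∑ i, (z.2.1 i - ts i) ^ 2 := ⟨_, rfl⟩
  have hQ0 : 0 ≤ Q := by rw [hQ]; exact Finset.sum_nonneg fun i _ => sq_nonneg _
  obtain ⟨T, hTQ⟩ : ∃ T, T = Real.sqrt Q := ⟨_, rfl⟩
  have hT0 : 0 ≤ T := hTQ ▸ Real.sqrt_nonneg _
  have hTsq : T ^ 2 = Q := hTQ ▸ Real.sq_sqrt hQ0
  have hTε : 0 ≤ T + ε := add_nonneg hT0 hε
  have ht : ∀ i, |z.2.1 i - ts i| ≤ T := fun i => by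
    rw [hTQ, hQ]
    exact Real.abs_le_sqrt (Finset.single_le_sum (f := fun i => (z.2.1 i - ts i) ^ 2)
      (fun j _ => sq_nonneg _) (Finset.mem_univ i))
  have hy : ∀ i, |z.2.2.2 i - ys i| ≤ Cy * (T + ε) := fun i => by
    rw [hCy]
    exact y_estimate (k1 i) (hts i) ((le_abs_self _).trans (hI i)) hR.le hT0 hε (hz.budget i)
      (hzR.y i) (ht i)
  have hp : ∀ j, |z.2.2.1 j - ps j| ≤ Cp * (T + ε) := fun j => by
    have := p_estimate hu hU' hξ hε hε3 hz hzs0 hy j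
    refine this.trans ?_
    rw [hCp]
    nlinarith
  have hx : ∀ i j, 0 < ps j - u i j * ys i → z.1 i j ≤ Cx * (T + ε) := by
    intro i j hpos
    have hrest : 0 ≤ R * J * (ξ + Cp + U * Cy) := by positivity
    have hrest' := mul_nonneg hrest hTε
    rcases hz.compl i j with h | ⟨_, h⟩
    · have h1 : ps j - u i j * ys i ≤ (ξ + Cp + U * Cy) * (T + ε) := by
        have a := (abs_le.1 (hp j)).1
        have b := (abs_le.1 h).2
        have d : u i j * (z.2.2.2 i - ys i) ≤ U * (Cy * (T + ε)) := by
          refine (le_abs_self _).trans ?_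
          rw [abs_mul, abs_of_nonneg (hu i j)]
          exact mul_le_mul (hU' i j) (hy i) (abs_nonneg _) hU0
        have d' : -(u i j * (z.2.2.2 i - ys i)) ≤ U * (Cy * (T + ε)) := by
          refine (neg_le_abs _).trans ?_
          rw [abs_mul, abs_of_nonneg (hu i j)]
          exact mul_le_mul (hU' i j) (hy i) (abs_nonneg _) hU0
        have e : 0 ≤ ξ * T := by positivity
        linarith
      have h2 : 1 ≤ J * ((ξ + Cp + U * Cy) * (T + ε)) := by
        calc (1 : ℝ) = (ps j - u i j * ys i)⁻¹ * (ps j - u i j * ys i) := by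
              rw [inv_mul_cancel₀ hpos.ne']
          _ ≤ _ := mul_le_mul ((le_abs_self _).trans (hJ (i, j))) h1 hpos.le hJ0
      have h3 : R * 1 ≤ R * (J * ((ξ + Cp + U * Cy) * (T + ε))) := by gcongr
      have h4 := (le_abs_self _).trans (hzR.x i j)
      rw [hCx]
      linarith
    · rw [hCx]
      linarith
  obtain ⟨x', hx'0, hx'A, hx'd⟩ := hH (fun q => z.1 q.1 q.2) (fun q => xs q.1 q.2)
    (fun q => hz.nonneg _ _) (fun q => k6 _ _)
  have hA : ‖allocMap u (fun q : Fin n × Fin m => 0 < ps q.2 - u q.1 q.2 * ys q.1)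
      (fun q => z.1 q.1 q.2) - allocMap u (fun q : Fin n × Fin m =>
        0 < ps q.2 - u q.1 q.2 * ys q.1) (fun q => xs q.1 q.2)‖ ≤ (1 + Cx) * (T + ε) := by
    have hCT := mul_nonneg hCx0 hTε
    have hpos : 0 ≤ (1 + Cx) * (T + ε) := by positivity
    simp only [allocMap_apply, Prod.mk_sub_mk, Prod.norm_mk]
    refine max_le ?_ (max_le ?_ ?_)
    · refine (pi_norm_le_iff_of_nonneg hpos).2 fun j => ?_
      simp only [Pi.sub_apply, k4 j, Real.norm_eq_abs]
      linarith [hz.supply j]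
    · refine (pi_norm_le_iff_of_nonneg hpos).2 fun i => ?_
      simp only [Pi.sub_apply, ← k5 i, Real.norm_eq_abs]
      have a := abs_le.1 (hz.util i)
      have b := abs_le.1 (ht i)
      rw [abs_le]; constructor <;> linarith
    · refine (pi_norm_le_iff_of_nonneg hpos).2 fun q => ?_
      simp only [Pi.sub_apply, Real.norm_eq_abs]
      split_ifs with h
      · have h0 : xs q.1 q.2 = 0 := (mul_eq_zero.1 (k2 q.1 q.2)).resolve_right h.ne'
        rw [h0, sub_zero, abs_of_nonneg (hz.nonneg _ _)]
        linarith [hx q.1 q.2 h]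
      · simpa using hpos
  simp only [allocMap_apply, Prod.mk.injEq] at hx'A
  obtain ⟨a1, a2, a3⟩ := hx'A
  obtain ⟨z', hz'def⟩ : ∃ z' : FisherQuad n m, z' = (fun i j => x' (i, j), ts, ps, ys) := ⟨_, rfl⟩
  have hz' : FisherKKT n m u w z' := by
    rw [hz'def]
    refine ⟨k1, fun i j => ?_, k3, fun j => ?_, fun i => ?_, fun i j => hx'0 (i, j)⟩
    · rcases (k3 i j).lt_or_eq with h | h
      · have h1 := congrFun a3 (i, j)
        have h0 : xs i j = 0 := (mul_eq_zero.1 (k2 i j)).resolve_right h.ne'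
        simp only [h, if_true, h0] at h1
        simp [h1]
      · simp only [← h, mul_zero]
    · exact (congrFun a1 j).trans (k4 j)
    · exact (k5 i).trans (congrFun a2 i).symm
  have hd : QuadLe (Cd * (T + ε)) (z - z') := by
    have g1 := mul_nonneg hHC hTε
    have g2 := mul_nonneg hCp0 hTε
    have g3 := mul_nonneg hCy0 hTε
    rw [hz'def, hCd]
    refine ⟨fun i j => ?_, fun i => (ht i).trans ?_, fun j => (hp j).trans ?_,
      fun i => (hy i).trans ?_⟩
    · have h1 := (norm_le_pi_norm _ (i, j)).trans (hx'd.trans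
        (mul_le_mul_of_nonneg_left hA hH0))
      have h2 : |z.1 i j - x' (i, j)| ≤ H * ((1 + Cx) * (T + ε)) := h1
      have h3 : |z.1 i j - x' (i, j)| ≤ (H * (1 + Cx) + 1 + Cp + Cy) * (T + ε) := by linarith
      exact h3
    all_goals linarith
  have hmono := monotone_estimate hu hξ hε (mul_nonneg hCd0 hTε) hz hz' hd (by rw [hz'def]; exact hts)
  have hts' : z'.2.1 = ts := by rw [hz'def]
  rw [hts', ← hB] at hmono
  have hcQ : c * Q ≤ B * (ε * (Cd * (T + ε))) := by
    refine le_trans ?_ hmono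
    rw [hQ, Finset.mul_sum]
    refine Finset.sum_le_sum fun i _ => ?_
    rw [mul_comm]
    refine mul_le_mul_of_nonneg_left ((hc i).trans ?_) (sq_nonneg _)
    exact div_le_div_of_nonneg_right (hylow i) (hts i).le
  have hGT : T ^ 2 ≤ G * (ε * (T + ε)) := by
    rw [hTsq, hG, div_mul_eq_mul_div, le_div_iff₀ hc0]
    linarith
  -- The quadratic inequality `T² ≤ G ε (T + ε)` forces `T = O(ε)`.
  have hT : T ≤ (2 * G + 1) * ε := by
    by_contra hlt
    push Not at hlt
    have hGε := mul_nonneg hG0 hε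
    have h1 : ε ≤ T := by linarith
    have h2 : G * ε * (T + ε) ≤ G * ε * (2 * T) :=
      mul_le_mul_of_nonneg_left (by linarith) hGε
    have h3 : 0 < T := by linarith
    nlinarith
  have hfin : Cd * (T + ε) ≤ Cd * (2 * G + 2) * ε := by
    rw [mul_assoc]
    exact mul_le_mul_of_nonneg_left (by linarith) hCd0
  exact ⟨z', hz', fun i j => (hd.x i j).trans hfin, fun i => (hd.t i).trans hfin,
    fun j => (hd.p j).trans hfin, fun i => (hd.y i).trans hfin⟩

/-- KKT error bound for the Fisher market problem: on every bounded region, the norm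
of the scaled KKT residual dominates a positive multiple of the distance to the KKT
solution set. -/
theorem fisher_kkt_error_bound (n m : ℕ) (u : Fin n → Fin m → ℝ) (w : Fin n → ℝ)
    (hu : ∀ i j, 0 ≤ u i j)
    (hrow : ∀ i, ∃ j, 0 < u i j)
    (hcol : ∀ j, ∃ i, 0 < u i j)
    (hw : ∀ i, 0 < w i)
    (hne : ∃ z : FisherQuad n m, FisherKKT n m u w z)
    (ξ : ℝ) (hξ : 0 < ξ) :
    ∀ R : ℝ, 0 < R → ∃ γ : ℝ, 0 < γ ∧
      ∀ z : FisherQuad n m, (∀ i j, 0 ≤ z.1 i j) → quadNorm n m z ≤ R →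
        γ * quadDist n m z {z' | FisherKKT n m u w z'} ≤ FResidNorm n m u w ξ z := by
  intro R hR
  obtain ⟨zs, hzs⟩ := hne
  obtain ⟨ε₀, C, hε₀, hC, hsmall⟩ := small_resid_bound hu hw hξ hR hzs
  obtain ⟨N, hN⟩ : ∃ N, N = Real.sqrt ((n : ℝ) * m + n + m + n) := ⟨_, rfl⟩
  have hN0 : 0 ≤ N := hN ▸ Real.sqrt_nonneg _
  -- `L` bounds the coordinates of `z - zs` for every `z` in the region.
  obtain ⟨L, hL⟩ : ∃ L, L = R + quadNorm n m zs := ⟨_, rfl⟩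
  have hL0 : 0 ≤ L := hL ▸ add_nonneg hR.le (Real.sqrt_nonneg _)
  obtain ⟨K, hK⟩ : ∃ K, K = N * C + N * L / ε₀ + 1 := ⟨_, rfl⟩
  have hK1 : N * C ≤ K := by
    have : 0 ≤ N * L / ε₀ := by positivity
    linarith
  have hK2 : N * L / ε₀ ≤ K := by
    have : 0 ≤ N * C := by positivity
    linarith
  have hKpos : 0 < K := by rw [hK]; positivity
  refine ⟨K⁻¹, inv_pos.2 hKpos, fun z hx hzR => ?_⟩
  rw [inv_mul_le_iff₀ hKpos]
  have happ := approxKKT_of_resid u w hξ z hx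
  have hε : 0 ≤ FResidNorm n m u w ξ z := Real.sqrt_nonneg _
  have hq := quadLe_quadNorm z
  have hzle : QuadLe R z := ⟨fun i j => (hq.x i j).trans hzR, fun i => (hq.t i).trans hzR,
    fun j => (hq.p j).trans hzR, fun i => (hq.y i).trans hzR⟩
  generalize FResidNorm n m u w ξ z = ε at *
  rcases le_total ε ε₀ with h | h
  · obtain ⟨z', hz', hd⟩ := hsmall ε z hε h happ hzle
    calc quadDist n m z {z' | FisherKKT n m u w z'} ≤ quadNorm n m (z - z') := quadDist_le hz'
      _ ≤ N * (C * ε) := hN ▸ quadNorm_le (by positivity) hd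
      _ = N * C * ε := by ring
      _ ≤ K * ε := by gcongr
  · have hs := quadLe_quadNorm zs
    have hd : QuadLe L (z - zs) := by
      rw [hL]
      exact ⟨fun i j => (abs_sub _ _).trans (add_le_add (hzle.x i j) (hs.x i j)),
        fun i => (abs_sub _ _).trans (add_le_add (hzle.t i) (hs.t i)),
        fun j => (abs_sub _ _).trans (add_le_add (hzle.p j) (hs.p j)),
        fun i => (abs_sub _ _).trans (add_le_add (hzle.y i) (hs.y i))⟩
    calc quadDist n m z {z' | FisherKKT n m u w z'} ≤ quadNorm n m (z - zs) := quadDist_le hzs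
      _ ≤ N * L := hN ▸ quadNorm_le hL0 hd
      _ = N * L / ε₀ * ε₀ := by field_simp
      _ ≤ K * ε := by gcongr

end
end
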